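/- (Series inversion of the lattice Fourier multiplier.) Let ℛ' ⊂ ℝ^d∖{0} be a finite symmetric set (ℛ' = −ℛ') spanning ℝ^d, and for each ρ ∈ ℛ' let A_ρ ∈ ℝ^{N×N} be symmetric with A_ρ = A_{−ρ}. Define Ĥ(k) := ∑_{ρ∈ℛ'} 4 A_ρ sin²(k·ρ/2) and, for n ≥ 1, Ĥ_{2n}(k) := ∑_{ρ∈ℛ'} (−1)^{n+1}(2/(2n)!)(k·ρ)^{2n} A_ρ. Assume stability: Ĥ(k) ⪰ c₀ (∑_{ρ∈ℛ'} 4 sin²(k·ρ/2)) Id in the sense of symmetric matrices, for all k ∈ ℝ^d and some c₀ > 0. Define 𝒜_{−2}(k) := Ĥ₂(k)^{−1} and, for n ≥ 0, 𝒜_{2n}(k) := ∑_{j=1}^{n+1} (−1)^j ∑_{α∈𝐀_{j,2n}} Ĥ₂(k)^{−1}Ĥ_{α₁}(k)Ĥ₂(k)^{−1}⋯Ĥ₂(k)^{−1}Ĥ_{α_j}(k)Ĥ₂(k)^{−1}, where 𝐀_{j,2n} := {α ∈ (2ℕ)^j : α_i ≥ 4 for all i and α₁+⋯+α_j = 2n+2j+2}.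 Then: (i) for every k ∈ ℝ^d, ∑_{n≥1} Ĥ_{2n}(k) converges absolutely to Ĥ(k); (ii) Ĥ₂(k) is invertible for every k ≠ 0, and each 𝒜_{2n} is smooth on ℝ^d∖{0} and positively homogeneous of degree 2n; (iii) there exists ε > 0 such that for every k with 0 < |k| < ε, Ĥ(k) is invertible and the series ∑_{n=−1}^{∞} 𝒜_{2n}(k) converges absolutely in matrix norm with sum Ĥ(k)^{−1}. -/

import Mathlib

noncomputable section

open scoped BigOperators
open MeasureTheory Filter Topology

namespace Defect

abbrev Vec (n : ℕ) : Type := Fin n → ℝ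

/-- Euclidean norm of a vector in `ℝ^n`. -/
def enorm {n : ℕ} (v : Vec n) : ℝ := Real.sqrt (∑ i, (v i) ^ 2)

/-- `⟨x⟩ := |x| + 2`. -/
def ang {n : ℕ} (v : Vec n) : ℝ := enorm v + 2

def dotV {n : ℕ} (x y : Vec n) : ℝ := ∑ i, x i * y i

/-- Matrix-vector product for a plain `Fin N → Fin N → ℝ` matrix. -/
def mulV {N : ℕ} (M : Fin N → Fin N → ℝ) (v : Vec N) : Vec N := fun i => ∑ j, M i j * v j

/-- Euclidean (Frobenius) norm of an `N × N` array. -/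
def mnorm {N : ℕ} (M : Fin N → Fin N → ℝ) : ℝ := Real.sqrt (∑ i, ∑ j, (M i j) ^ 2)

/-- The lattice point `A z` for `z ∈ ℤ^d`. -/
def latticePt (d : ℕ) (A : Matrix (Fin d) (Fin d) ℝ) (z : Fin d → ℤ) : Vec d :=
  fun i => ∑ j, A i j * (z j : ℝ)

/-- The Bravais lattice `Λ = A ℤ^d`. -/
def Lattice (d : ℕ) (A : Matrix (Fin d) (Fin d) ℝ) : Set (Vec d) :=
  Set.range (latticePt d A)

/-- First-order finite difference `D_ρ u (ℓ) = u(ℓ+ρ) - u(ℓ)`. -/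
def D1 {d : ℕ} {M : Type} [AddCommGroup M] (ρ : Vec d) (u : Vec d → M) (ℓ : Vec d) : M :=
  u (ℓ + ρ) - u ℓ

/-- Iterated finite difference `D_{ρ₁} ⋯ D_{ρ_j} u (ℓ)` (closed form). -/
def Dmulti {d : ℕ} {M : Type} [AddCommGroup M] [Module ℝ M] {j : ℕ}
    (ρs : Fin j → Vec d) (u : Vec d → M) (ℓ : Vec d) : M :=
  ∑ S : Finset (Fin j), ((-1 : ℝ) ^ (j - S.card)) • u (ℓ + ∑ i ∈ S, ρs i)

/-- `|Du(ℓ)|²`, the squared Euclidean norm of the stencil of first differences. -/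
def Dnorm1Sq {d N : ℕ} (R : Finset (Vec d)) (u : Vec d → Vec N) (ℓ : Vec d) : ℝ :=
  ∑ ρ ∈ R, (enorm (D1 ρ u ℓ)) ^ 2

/-- `|D^j u(ℓ)|`, the Euclidean norm of the array `(D_{ρ⃗} u(ℓ))_{ρ⃗ ∈ R^j}`. -/
def DnormJ {d N : ℕ} (R : Finset (Vec d)) (j : ℕ) (u : Vec d → Vec N) (ℓ : Vec d) : ℝ :=
  Real.sqrt (∑ ρs : Fin j → {x // x ∈ R},
    (enorm (Dmulti (fun i => (ρs i : Vec d)) u ℓ)) ^ 2)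

/-- The linearized lattice operator
`H[u](ℓ) = ∑_{σ,ρ∈R} (C_{σρ} D_ρ u(ℓ-σ) - C_{σρ} D_ρ u(ℓ))`. -/
def Hop (d N : ℕ) (R : Finset (Vec d)) (C : Vec d → Vec d → Fin N → Fin N → ℝ)
    (u : Vec d → Vec N) (ℓ : Vec d) : Vec N :=
  ∑ σ ∈ R, ∑ ρ ∈ R, (mulV (C σ ρ) (D1 ρ u (ℓ - σ)) - mulV (C σ ρ) (D1 ρ u ℓ))

/-- `u ∈ 𝓗¹`. -/
def InH1 {d N : ℕ} (A : Matrix (Fin d) (Fin d) ℝ) (R : Finset (Vec d))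
    (u : Vec d → Vec N) : Prop :=
  Summable fun z : Fin d → ℤ => Dnorm1Sq R u (latticePt d A z)

/-- `u ∈ 𝓗ᶜ` : the stencil `Du` has bounded support on the lattice. -/
def InHc {d N : ℕ} (A : Matrix (Fin d) (Fin d) ℝ) (R : Finset (Vec d))
    (u : Vec d → Vec N) : Prop :=
  ∃ rad : ℝ, ∀ z : Fin d → ℤ, rad ≤ enorm (latticePt d A z) →
    ∀ ρ ∈ R, D1 ρ u (latticePt d A z) = 0

/-- Stability of the lattice operator `H`. -/
def IsStable (d N : ℕ) (A : Matrix (Fin d) (Fin d) ℝ) (R : Finset (Vec d))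
    (C : Vec d → Vec d → Fin N → Fin N → ℝ) : Prop :=
  ∃ c₀ : ℝ, 0 < c₀ ∧ ∀ u : Vec d → Vec N, InHc A R u →
    c₀ * (∑' z : Fin d → ℤ, Dnorm1Sq R u (latticePt d A z)) ≤
      ∑' z : Fin d → ℤ, ∑ σ ∈ R, ∑ ρ ∈ R,
        dotV (D1 σ u (latticePt d A z)) (mulV (C σ ρ) (D1 ρ u (latticePt d A z)))

/-- `k`-th column of a matrix-valued function. -/
def col {d N : ℕ} (G : Vec d → Fin N → Fin N → ℝ) (k : Fin N) : Vec d → Vec N :=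
  fun x i => G x i k

/-- `|D^j 𝒢(ℓ)|` for matrix-valued `𝒢`. -/
def DnormJmat {d N : ℕ} (R : Finset (Vec d)) (j : ℕ)
    (G : Vec d → Fin N → Fin N → ℝ) (ℓ : Vec d) : ℝ :=
  Real.sqrt (∑ k : Fin N, (DnormJ R j (col G k) ℓ) ^ 2)

/-- `𝒢` is a lattice Green's function for `H`. -/
def IsLatticeGreen (d N : ℕ) (A : Matrix (Fin d) (Fin d) ℝ) (R : Finset (Vec d))
    (C : Vec d → Vec d → Fin N → Fin N → ℝ) (G : Vec d → Fin N → Fin N → ℝ) : Prop :=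
  (∀ (k : Fin N) (z : Fin d → ℤ),
      Hop d N R C (col G k) (latticePt d A z) =
        if latticePt d A z = 0 then Pi.single k 1 else 0) ∧
  (∀ j : ℕ, 1 ≤ j → ∃ cj : ℝ, ∀ z : Fin d → ℤ,
      DnormJmat R j G (latticePt d A z) ≤
        cj * ang (latticePt d A z) ^ ((2 : ℝ) - d - j))

/-- A symmetric array `b ∈ (ℝ^{Fin d})^{⊙ i}`. -/
def SymArr {d i : ℕ} (b : (Fin i → Fin d) → ℝ) : Prop :=
  ∀ (π : Equiv.Perm (Fin i)) (σv : Fin i → Fin d), b (σv ∘ π) = b σv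

/-- `b : D_𝒮^i f`, a multipole term built from the basis `s`. -/
def multipole (d N : ℕ) (s : Fin d → Vec d) (i : ℕ) (b : (Fin i → Fin d) → ℝ)
    (f : Vec d → Vec N) : Vec d → Vec N :=
  fun ℓ => ∑ σv : Fin i → Fin d, b σv • Dmulti (fun m => s (σv m)) f ℓ

/-- Iterated partial derivative `∂_{j₁} ⋯ ∂_{j_i} f (x)`. -/
def pderivMulti {d : ℕ} (i : ℕ) (js : Fin i → Fin d) (f : Vec d → ℝ) (x : Vec d) : ℝ :=
  iteratedFDeriv ℝ i f x (fun m => Pi.single (js m) (1 : ℝ))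

/-- `a : ∇^i f (x)` for a tensor `a ∈ (ℝ^d)^{⊗ i}`. -/
def aContract {d : ℕ} (i : ℕ) (a : (Fin i → Fin d) → ℝ) (f : Vec d → ℝ) (x : Vec d) : ℝ :=
  ∑ js : Fin i → Fin d, a js * pderivMulti i js f x

/-- Elementary tensor `σ⃗^⊗` as an array. -/
def tensorPow {d k : ℕ} (σs : Fin k → Vec d) : (Fin k → Fin d) → ℝ :=
  fun js => ∏ m, σs m (js m)

/-- Symmetric tensor product `σ⃗^⊙`. -/
def symTensor {d k : ℕ} (σs : Fin k → Vec d) : (Fin k → Fin d) → ℝ :=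
  fun js => ((k.factorial : ℝ))⁻¹ * ∑ π : Equiv.Perm (Fin k), tensorPow (σs ∘ π) js

/-- A symmetric tensor (array invariant under index permutations). -/
def SymTensor {d k : ℕ} (T : (Fin k → Fin d) → ℝ) : Prop :=
  ∀ (π : Equiv.Perm (Fin k)) (js : Fin k → Fin d), T (js ∘ π) = T js

/-- `∂V/∂g_ρ (gs)` as a vector in `ℝ^N`. -/
def gradV {d N : ℕ} (R : Finset (Vec d)) (V : ({x // x ∈ R} → Vec N) → ℝ)
    (ρ : {x // x ∈ R}) (gs : {x // x ∈ R} → Vec N) : Vec N :=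
  fun i => fderiv ℝ V gs (Pi.single ρ (Pi.single i 1))

/-- The finite-difference stencil `Du(ℓ) = (D_ρ u(ℓ))_{ρ ∈ R}`. -/
def Dstencil {d N : ℕ} (R : Finset (Vec d)) (u : Vec d → Vec N) (ℓ : Vec d) :
    {x // x ∈ R} → Vec N :=
  fun ρ => D1 (ρ : Vec d) u ℓ

/-- `C_{σρ} = ∂²V/∂g_σ ∂g_ρ (0)`. -/
def CofV {d N : ℕ} (R : Finset (Vec d)) (V : ({x // x ∈ R} → Vec N) → ℝ)
    (σ ρ : Vec d) (i j : Fin N) : ℝ :=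
  if hσ : σ ∈ R then
    if hρ : ρ ∈ R then
      iteratedFDeriv ℝ 2 V 0
        ![Pi.single ⟨σ, hσ⟩ (Pi.single i 1), Pi.single ⟨ρ, hρ⟩ (Pi.single j 1)]
    else 0
  else 0

/-- Summand of the first variation `δE(u)[v]` at a site. -/
def deltaEsite {d N : ℕ} (R : Finset (Vec d)) (V : ({x // x ∈ R} → Vec N) → ℝ)
    (u v : Vec d → Vec N) (ℓ : Vec d) : ℝ :=
  ∑ ρ ∈ R.attach, dotV (gradV R V ρ (Dstencil R u ℓ)) (D1 (ρ : Vec d) v ℓ)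

/-- The pointwise atomistic force `δE(u)(ℓ)`. -/
def deltaEpt {d N : ℕ} (R : Finset (Vec d)) (V : ({x // x ∈ R} → Vec N) → ℝ)
    (u : Vec d → Vec N) (ℓ : Vec d) : Vec N :=
  ∑ ρ ∈ R.attach,
    (gradV R V ρ (Dstencil R u (ℓ - (ρ : Vec d))) - gradV R V ρ (Dstencil R u ℓ))

/-- Point symmetry of the site potential. -/
def PointSym {d N : ℕ} (R : Finset (Vec d)) (hRsym : ∀ ρ ∈ R, -ρ ∈ R)
    (V : ({x // x ∈ R} → Vec N) → ℝ) : Prop :=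
  ∀ gs : {x // x ∈ R} → Vec N,
    V (fun ρ => -(gs ⟨-(ρ : Vec d), hRsym _ ρ.2⟩)) = V gs

/-- The Cauchy–Born elasticity tensor `ℂ_{iajb}`. -/
def CB {d N : ℕ} (A : Matrix (Fin d) (Fin d) ℝ) (R : Finset (Vec d))
    (C : Vec d → Vec d → Fin N → Fin N → ℝ)
    (i : Fin N) (a : Fin d) (j : Fin N) (b : Fin d) : ℝ :=
  (|A.det|)⁻¹ * ∑ ρ ∈ R, ∑ σ ∈ R, C ρ σ i j * ρ a * σ b

/-- The lattice Fourier multiplier `Ĥ(k) = ∑_ρ 4 A_ρ sin²(k·ρ/2)`. -/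
def Hhat (d N : ℕ) (R' : Finset (Vec d)) (Am : Vec d → Matrix (Fin N) (Fin N) ℝ)
    (k : Vec d) : Matrix (Fin N) (Fin N) ℝ :=
  ∑ ρ ∈ R', (4 * Real.sin (dotV k ρ / 2) ^ 2) • Am ρ

/-- The homogeneous expansion terms `Ĥ_{2n}(k)`. -/
def H2n (d N : ℕ) (R' : Finset (Vec d)) (Am : Vec d → Matrix (Fin N) (Fin N) ℝ)
    (n : ℕ) (k : Vec d) : Matrix (Fin N) (Fin N) ℝ :=
  ∑ ρ ∈ R', ((-1 : ℝ) ^ (n + 1) * 2 / ((2 * n).factorial : ℝ) * (dotV k ρ) ^ (2 * n)) • Am ρ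

/-- Frobenius norm of a matrix. -/
def mnormM {N : ℕ} (M : Matrix (Fin N) (Fin N) ℝ) : ℝ :=
  Real.sqrt (∑ i, ∑ j, (M i j) ^ 2)

/-- The `2n`-homogeneous term `𝒜_{2n}` of the inverse multiplier series. -/
def calA (d N : ℕ) (R' : Finset (Vec d)) (Am : Vec d → Matrix (Fin N) (Fin N) ℝ)
    (n : ℕ) (k : Vec d) : Matrix (Fin N) (Fin N) ℝ :=
  ∑ j ∈ Finset.Icc 1 (n + 1), ((-1 : ℝ) ^ j) •
    ∑ fα : Fin j → Fin (2 * n + 2 * j + 3),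
      if (∀ i, 4 ≤ (fα i : ℕ) ∧ (fα i : ℕ) % 2 = 0) ∧
          (∑ i, (fα i : ℕ)) = 2 * n + 2 * j + 2 then
        (H2n d N R' Am 1 k)⁻¹ *
          (List.ofFn (fun i : Fin j =>
            H2n d N R' Am ((fα i : ℕ) / 2) k * (H2n d N R' Am 1 k)⁻¹)).prod
      else 0

section abstractpart

variable {𝔸 : Type*} [NormedRing 𝔸]

/-- Sum of `j`-fold products with indices summing to `m`. -/
def TT (E : ℕ → 𝔸) (j m : ℕ) : 𝔸 :=
  ∑ g ∈ Finset.Nat.antidiagonalTuple j m, (List.ofFn (fun i : Fin j => E (g i))).prod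

lemma TT_zero (E : ℕ → 𝔸) (m : ℕ) : TT E 0 m = if m = 0 then 1 else 0 := by
  unfold TT
  cases m <;> simp

lemma TT_succ (E : ℕ → 𝔸) (j m : ℕ) :
    TT E (j + 1) m = ∑ x ∈ Finset.HasAntidiagonal.antidiagonal m, E x.1 * TT E j x.2 := by
  unfold TT
  simp_rw [Finset.mul_sum]
  rw [Finset.sum_sigma']
  symm
  refine Finset.sum_bij' (fun (x : (_ : ℕ × ℕ) × (Fin j → ℕ)) _ => (Fin.cons x.1.1 x.2 : Fin (j+1) → ℕ))
    (fun g _ => ⟨(g 0, ∑ i, Fin.tail g i), Fin.tail g⟩) ?_ ?_ ?_ ?_ ?_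
  · rintro ⟨⟨a, b⟩, f⟩ h
    simp [Finset.Nat.mem_antidiagonalTuple, Fin.sum_univ_succ] at h ⊢
    omega
  · intro g h
    simp [Finset.Nat.mem_antidiagonalTuple, Fin.sum_univ_succ, Fin.tail] at h ⊢
    omega
  · rintro ⟨⟨a, b⟩, f⟩ h
    simp [Finset.Nat.mem_antidiagonalTuple] at h ⊢
    omega
  · intro g h
    simp
  · rintro ⟨⟨a, b⟩, f⟩ h
    simp [List.ofFn_succ]

lemma TT_eq_zero (E : ℕ → 𝔸) (hE : E 0 = 0) (j : ℕ) : ∀ m, m < j → TT E j m = 0 := by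
  induction j with
  | zero => intro m h; omega
  | succ j ih =>
    intro m h
    rw [TT_succ]
    refine Finset.sum_eq_zero fun x hx => ?_
    rw [Finset.HasAntidiagonal.mem_antidiagonal] at hx
    rcases Nat.eq_zero_or_pos x.1 with h0 | h0
    · rw [h0, hE, zero_mul]
    · rw [ih _ (by omega), mul_zero]

/-- Coefficients of the inverse series. -/
def bb (E : ℕ → 𝔸) (m : ℕ) : 𝔸 := ∑ j ∈ Finset.range (m + 1), (-1) ^ j * TT E j m

lemma bb_eq (E : ℕ → 𝔸) (hE : E 0 = 0) (m M : ℕ) (h : m ≤ M) :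
    ∑ j ∈ Finset.range (M + 1), (-1) ^ j * TT E j m = bb E m := by
  unfold bb
  symm
  apply Finset.sum_subset
  · intro x; simp; omega
  · intro x _ hx
    rw [TT_eq_zero E hE x m (by simp at hx; omega), mul_zero]

lemma bb_zero (E : ℕ → 𝔸) : bb E 0 = 1 := by
  simp [bb, TT_zero]

lemma bb_succ (E : ℕ → 𝔸) (hE : E 0 = 0) (m : ℕ) :
    bb E (m + 1) = - ∑ x ∈ Finset.HasAntidiagonal.antidiagonal (m + 1), E x.1 * bb E x.2 := by
  have h1 : ∀ x ∈ Finset.HasAntidiagonal.antidiagonal (m + 1), E x.1 * bb E x.2 =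
      ∑ j ∈ Finset.range (m + 1), (-1) ^ j * (E x.1 * TT E j x.2) := by
    intro x hx
    rw [Finset.HasAntidiagonal.mem_antidiagonal] at hx
    rcases Nat.eq_zero_or_pos x.1 with h0 | h0
    · simp [h0, hE]
    · rw [← bb_eq E hE x.2 m (by omega), Finset.mul_sum]
      refine Finset.sum_congr rfl fun j _ => ?_
      rw [← mul_assoc, ← mul_assoc]
      congr 1
      exact ((Commute.neg_one_left (E x.1)).pow_left j).symm.eq
  rw [Finset.sum_congr rfl h1, Finset.sum_comm, bb, Finset.sum_range_succ', TT_zero]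
  simp [TT_succ, Finset.mul_sum, pow_succ]

lemma sum_quarter (m : ℕ) :
    ∑ x ∈ Finset.HasAntidiagonal.antidiagonal (m + 1),
      (if x.1 = 0 then (0:ℝ) else (1/4 : ℝ) ^ x.1) * (1/2 : ℝ) ^ x.2 ≤ (1/2 : ℝ) ^ (m + 1) := by
  rw [Finset.Nat.sum_antidiagonal_succ]
  simp only [if_true, zero_mul, zero_add, Nat.add_eq_zero_iff, one_ne_zero, and_false, if_false]
  have : ∀ n : ℕ, ∑ x ∈ Finset.HasAntidiagonal.antidiagonal n, (1/4 : ℝ) ^ (x.1 + 1) * (1/2 : ℝ) ^ x.2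
      = (1/2) ^ (n + 1) - (1/2) * (1/4)^ n * (1/2) := by
    intro n
    induction n with
    | zero => norm_num
    | succ n ih =>
      rw [Finset.Nat.sum_antidiagonal_succ']
      simp only [pow_succ] at ih ⊢
      simp_rw [← mul_assoc]
      rw [← Finset.sum_mul, ih]
      ring
  rw [this]
  have : (0:ℝ) ≤ (1/4) ^ m := by positivity
  linarith

lemma bb_bound (E : ℕ → 𝔸) (hE : E 0 = 0) (hb : ∀ a, 1 ≤ a → ‖E a‖ ≤ (1/4 : ℝ) ^ a) (m : ℕ) :
    ‖bb E m‖ ≤ ‖(1 : 𝔸)‖ * (1/2 : ℝ) ^ m := by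
  induction m using Nat.strong_induction_on with
  | _ m ih =>
  cases m with
  | zero => simp [bb_zero]
  | succ m =>
    rw [bb_succ E hE, norm_neg]
    refine (norm_sum_le _ _).trans ?_
    refine le_trans ?_ (mul_le_mul_of_nonneg_left (sum_quarter m) (norm_nonneg _))
    rw [Finset.mul_sum]
    refine Finset.sum_le_sum fun x hx => ?_
    rw [Finset.HasAntidiagonal.mem_antidiagonal] at hx
    split_ifs with h0
    · simp [h0, hE]
    · refine (norm_mul_le _ _).trans ?_
      have h1 := hb x.1 (by omega)
      have h2 := ih x.2 (by omega)
      calc ‖E x.1‖ * ‖bb E x.2‖ ≤ (1/4 : ℝ) ^ x.1 * (‖(1 : 𝔸)‖ * (1/2 : ℝ) ^ x.2) := by gcongr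
        _ = _ := by ring

lemma bb_summable (E : ℕ → 𝔸) (hE : E 0 = 0) (hb : ∀ a, 1 ≤ a → ‖E a‖ ≤ (1/4 : ℝ) ^ a) :
    Summable (fun m => ‖bb E m‖) := by
  refine Summable.of_nonneg_of_le (fun _ => norm_nonneg _) (bb_bound E hE hb) ?_
  exact (summable_geometric_of_lt_one (by norm_num) (by norm_num)).mul_left _

lemma bb_main [CompleteSpace 𝔸] (E : ℕ → 𝔸) (hE : E 0 = 0)
    (hb : ∀ a, 1 ≤ a → ‖E a‖ ≤ (1/4 : ℝ) ^ a) :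
    ∃ S b : 𝔸, HasSum E S ∧ HasSum (bb E) b ∧ (1 + S) * b = 1 := by
  have hs : Summable (fun m => ‖E m‖) := by
    refine Summable.of_nonneg_of_le (fun _ => norm_nonneg _) (f := fun a => (1/4 : ℝ) ^ a) ?_ ?_
    · intro a
      rcases Nat.eq_zero_or_pos a with h0 | h0
      · simp [h0, hE]
      · exact hb a h0
    · exact (summable_geometric_of_lt_one (by norm_num) (by norm_num))
  have hsE : Summable E := hs.of_norm
  have hbs := bb_summable E hE hb
  refine ⟨∑' a, E a, ∑' m, bb E m, hsE.hasSum, hbs.of_norm.hasSum, ?_⟩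
  have hprod := tsum_mul_tsum_eq_tsum_sum_antidiagonal_of_summable_norm hs hbs
  have hshift := hbs.of_norm.tsum_eq_zero_add
  have hanti : (∑' n, ∑ x ∈ Finset.HasAntidiagonal.antidiagonal n, E x.1 * bb E x.2) = - ∑' m, bb E (m + 1) := by
    have hsm : Summable (fun n => ∑ x ∈ Finset.HasAntidiagonal.antidiagonal n, E x.1 * bb E x.2) :=
      (summable_norm_sum_mul_antidiagonal_of_summable_norm hs hbs).of_norm
    rw [hsm.tsum_eq_zero_add]
    simp only [Finset.Nat.antidiagonal_zero, Finset.sum_singleton, hE, zero_mul, zero_add]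
    rw [← tsum_neg]
    refine tsum_congr fun m => ?_
    rw [bb_succ E hE, neg_neg]
  rw [add_mul, one_mul, hprod, hanti, hshift, bb_zero]
  simp

end abstractpart

section concrete

attribute [local instance] Matrix.frobeniusNormedAddCommGroup Matrix.frobeniusNormedSpace
  Matrix.frobeniusNormedRing Matrix.frobeniusNormedAlgebra

lemma mnormM_eq {N : ℕ} (M : Matrix (Fin N) (Fin N) ℝ) : mnormM M = ‖M‖ := by
  rw [Matrix.frobenius_norm_def, mnormM, Real.sqrt_eq_rpow]
  simp

lemma entry_le {N : ℕ} (M : Matrix (Fin N) (Fin N) ℝ) (i j : Fin N) : |M i j| ≤ ‖M‖ := by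
  rw [← mnormM_eq, mnormM]
  apply Real.abs_le_sqrt
  have h1 : (M i j) ^ 2 ≤ ∑ j, (M i j) ^ 2 :=
    Finset.single_le_sum (f := fun j => (M i j) ^ 2) (fun _ _ => sq_nonneg _) (Finset.mem_univ j)
  have h2 : ∑ j, (M i j) ^ 2 ≤ ∑ i, ∑ j, (M i j) ^ 2 :=
    Finset.single_le_sum (f := fun i => ∑ j, (M i j) ^ 2)
      (fun _ _ => Finset.sum_nonneg fun _ _ => sq_nonneg _) (Finset.mem_univ i)
  exact h1.trans h2

lemma hasSum_entry {N : ℕ} {f : ℕ → Matrix (Fin N) (Fin N) ℝ} {S : Matrix (Fin N) (Fin N) ℝ}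
    (h : HasSum f S) (i j : Fin N) : HasSum (fun n => f n i j) (S i j) := by
  have := h.map (Matrix.entryAddMonoidHom ℝ i j)
    (AddMonoidHomClass.continuous_of_bound _ 1 (fun x => by simpa using entry_le x i j))
  simpa [Function.comp_def] using this

variable {d N : ℕ} (R' : Finset (Vec d)) (Am : Vec d → Matrix (Fin N) (Fin N) ℝ)

lemma hasSum_scalar (x : ℝ) :
    HasSum (fun n : ℕ => (-1 : ℝ) ^ (n + 1 + 1) * 2 / ((2 * (n + 1)).factorial : ℝ) * x ^ (2 * (n + 1)))
      (4 * Real.sin (x / 2) ^ 2) := by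
  have h := (hasSum_nat_add_iff' 1).mpr (Real.hasSum_cos x)
  have h2 := h.mul_left (-2)
  have e1 : (fun n : ℕ => (-1 : ℝ) ^ (n + 1 + 1) * 2 / ((2 * (n + 1)).factorial : ℝ) *
      x ^ (2 * (n + 1))) =
      fun n : ℕ => -2 * ((-1 : ℝ) ^ (n + 1) * x ^ (2 * (n + 1)) / ((2 * (n + 1)).factorial : ℝ)) := by
    funext n
    rw [pow_succ]
    ring
  have e2 : 4 * Real.sin (x / 2) ^ 2 = -2 * (Real.cos x -
      ∑ i ∈ Finset.range 1, (-1 : ℝ) ^ i * x ^ (2 * i) / ((2 * i).factorial : ℝ)) := by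
    have h4 : Real.cos x = 1 - 2 * Real.sin (x/2) ^ 2 := by
      have := Real.cos_two_mul' (x/2)
      have h3 := Real.sin_sq_add_cos_sq (x/2)
      rw [mul_div_cancel₀ x (two_ne_zero)] at this
      linarith
    rw [h4]
    simp
    ring
  rw [e1, e2]
  exact h2

lemma H_entries (k : Vec d) (i j : Fin N) :
    HasSum (fun n : ℕ => H2n d N R' Am (n + 1) k i j) (Hhat d N R' Am k i j) := by
  simp only [H2n, Hhat, Matrix.sum_apply, Matrix.smul_apply, smul_eq_mul]
  exact hasSum_sum fun ρ _ => (hasSum_scalar (dotV k ρ)).mul_right _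

lemma H_summable (k : Vec d) : Summable (fun n : ℕ => ‖H2n d N R' Am (n + 1) k‖) := by
  refine Summable.of_nonneg_of_le (fun _ => norm_nonneg _)
    (f := fun n : ℕ => ∑ ρ ∈ R', |(-1 : ℝ) ^ (n + 1 + 1) * 2 / ((2 * (n + 1)).factorial : ℝ) *
      (dotV k ρ) ^ (2 * (n + 1))| * ‖Am ρ‖) ?_ ?_
  · intro n
    refine (norm_sum_le _ _).trans (le_of_eq ?_)
    refine Finset.sum_congr rfl fun ρ _ => ?_
    rw [norm_smul, Real.norm_eq_abs]
  · exact summable_sum fun ρ _ => ((hasSum_scalar (dotV k ρ)).summable.abs).mul_right _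

lemma dotV_smul (t : ℝ) (k ρ : Vec d) : dotV (t • k) ρ = t * dotV k ρ := by
  simp [dotV, Finset.mul_sum, mul_assoc]

lemma H2n_smul (n : ℕ) (t : ℝ) (k : Vec d) :
    H2n d N R' Am n (t • k) = t ^ (2 * n) • H2n d N R' Am n k := by
  simp only [H2n, Finset.smul_sum, smul_smul, dotV_smul, mul_pow]
  refine Finset.sum_congr rfl fun ρ _ => ?_
  congr 1
  ring

lemma quad (c : Vec d → ℝ) (ξ : Vec N) :
    dotV ξ ((∑ ρ ∈ R', c ρ • Am ρ).mulVec ξ) = ∑ ρ ∈ R', c ρ * dotV ξ ((Am ρ).mulVec ξ) := by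
  have : ∀ v w : Vec N, dotV v w = v ⬝ᵥ w := fun _ _ => rfl
  simp only [this, Matrix.sum_mulVec, dotProduct_sum, Matrix.smul_mulVec, dotProduct_smul,
    smul_eq_mul]

lemma tendsto_sin (x : ℝ) :
    Tendsto (fun t : ℝ => (t ^ 2)⁻¹ * (4 * Real.sin (t * x / 2) ^ 2)) (𝓝[≠] 0) (𝓝 (x ^ 2)) := by
  have h : HasDerivAt (fun t : ℝ => Real.sin (t * x / 2)) (x / 2) 0 := by
    have h0 : HasDerivAt (fun t : ℝ => t * x / 2) (1 * x / 2) 0 :=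
      ((hasDerivAt_id (0:ℝ)).mul_const x).div_const 2
    have := h0.sin
    simpa using this
  have h2 := (hasDerivAt_iff_tendsto_slope.mp h).pow 2 |>.const_mul 4
  convert h2 using 1
  · funext t
    simp [slope_def_field]
    ring
  · congr 1
    ring

lemma H2_coercive (c₀ : ℝ)
    (hstab : ∀ (k : Vec d) (ξ : Vec N),
      c₀ * (∑ ρ ∈ R', 4 * Real.sin (dotV k ρ / 2) ^ 2) * (∑ i, (ξ i) ^ 2) ≤
        dotV ξ ((Hhat d N R' Am k).mulVec ξ)) (k : Vec d) (ξ : Vec N) :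
    c₀ * (∑ ρ ∈ R', (dotV k ρ) ^ 2) * (∑ i, (ξ i) ^ 2) ≤
        dotV ξ ((H2n d N R' Am 1 k).mulVec ξ) := by
  rw [H2n, quad]
  have hL : Tendsto (fun t : ℝ => c₀ * (∑ ρ ∈ R', (t ^ 2)⁻¹ * (4 * Real.sin (t * dotV k ρ / 2) ^ 2))
      * (∑ i, (ξ i) ^ 2)) (𝓝[≠] 0) (𝓝 (c₀ * (∑ ρ ∈ R', (dotV k ρ) ^ 2) * (∑ i, (ξ i) ^ 2))) :=
    ((tendsto_finsetSum _ fun ρ _ => tendsto_sin _).const_mul _).mul_const _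
  have hR : Tendsto (fun t : ℝ => ∑ ρ ∈ R', (t ^ 2)⁻¹ * (4 * Real.sin (t * dotV k ρ / 2) ^ 2) *
      dotV ξ ((Am ρ).mulVec ξ)) (𝓝[≠] 0) (𝓝 (∑ ρ ∈ R', (dotV k ρ) ^ 2 * dotV ξ ((Am ρ).mulVec ξ))) :=
    tendsto_finsetSum _ fun ρ _ => (tendsto_sin _).mul_const _
  have := le_of_tendsto_of_tendsto hL hR (Eventually.of_forall fun t => by
    have h := hstab (t • k) ξ
    rw [Hhat, quad] at h
    simp only [dotV_smul] at h
    have h2 := mul_le_mul_of_nonneg_left h (by positivity : (0:ℝ) ≤ (t ^ 2)⁻¹)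
    refine le_trans (le_of_eq ?_) (h2.trans (le_of_eq ?_))
    · have h3 : ∑ ρ ∈ R', (t ^ 2)⁻¹ * (4 * Real.sin (t * dotV k ρ / 2) ^ 2) =
          (t ^ 2)⁻¹ * ∑ ρ ∈ R', (4 * Real.sin (t * dotV k ρ / 2) ^ 2) :=
        (Finset.mul_sum _ _ _).symm
      beta_reduce
      rw [h3]; ring
    · rw [Finset.mul_sum]
      refine Finset.sum_congr rfl fun ρ _ => by ring)
  refine this.trans (le_of_eq ?_)
  refine Finset.sum_congr rfl fun ρ _ => ?_
  norm_num

lemma sum_dot_pos (hRspan : Submodule.span ℝ (R' : Set (Vec d)) = ⊤) (k : Vec d) (hk : k ≠ 0) :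
    0 < ∑ ρ ∈ R', (dotV k ρ) ^ 2 := by
  by_contra hcon
  have h0 : ∑ ρ ∈ R', (dotV k ρ) ^ 2 = 0 :=
    le_antisymm (not_lt.mp hcon) (Finset.sum_nonneg fun _ _ => sq_nonneg _)
  rw [Finset.sum_eq_zero_iff_of_nonneg (fun _ _ => sq_nonneg _)] at h0
  have hall : ∀ v : Vec d, k ⬝ᵥ v = 0 := by
    intro v
    have hv : v ∈ Submodule.span ℝ (R' : Set (Vec d)) := by rw [hRspan]; trivial
    induction hv using Submodule.span_induction with
    | mem x hx => exact pow_eq_zero_iff (two_ne_zero) |>.mp (h0 x hx)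
    | zero => simp
    | add x y _ _ hx hy => rw [dotProduct_add, hx, hy, add_zero]
    | smul a x _ hx => rw [dotProduct_smul, hx, smul_zero]
  exact hk (dotProduct_self_eq_zero.mp (hall k))

lemma H2_unit (hRspan : Submodule.span ℝ (R' : Set (Vec d)) = ⊤)
    (c₀ : ℝ) (hc₀ : 0 < c₀)
    (hstab : ∀ (k : Vec d) (ξ : Vec N),
      c₀ * (∑ ρ ∈ R', 4 * Real.sin (dotV k ρ / 2) ^ 2) * (∑ i, (ξ i) ^ 2) ≤
        dotV ξ ((Hhat d N R' Am k).mulVec ξ)) (k : Vec d) (hk : k ≠ 0) :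
    IsUnit (H2n d N R' Am 1 k).det := by
  rw [isUnit_iff_ne_zero]
  intro hdet
  obtain ⟨v, hv, hv0⟩ := Matrix.exists_mulVec_eq_zero_iff.mpr hdet
  have h := H2_coercive R' Am c₀ hstab k v
  rw [hv0] at h
  have h1 : dotV v 0 = 0 := by simp [dotV]
  rw [h1] at h
  have h2 : 0 < ∑ i, (v i) ^ 2 := by
    obtain ⟨i, hi⟩ := Function.ne_iff.mp hv
    exact Finset.sum_pos' (fun _ _ => sq_nonneg _) ⟨i, Finset.mem_univ _, by
      have : v i ≠ 0 := hi
      positivity⟩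
  have := sum_dot_pos R' hRspan k hk
  have : 0 < c₀ * (∑ ρ ∈ R', (dotV k ρ) ^ 2) * (∑ i, (v i) ^ 2) := by positivity
  linarith

/-- Entrywise smoothness on the punctured space. -/
def Smo (F : Vec d → Matrix (Fin N) (Fin N) ℝ) : Prop :=
  ∀ i j : Fin N, ContDiffOn ℝ (⊤ : ℕ∞) (fun k => F k i j) {x : Vec d | x ≠ 0}

lemma Smo.mul {F G : Vec d → Matrix (Fin N) (Fin N) ℝ} (hF : Smo F) (hG : Smo G) :
    Smo (fun k => F k * G k) := by
  intro i j
  simp only [Matrix.mul_apply]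
  exact ContDiffOn.sum fun l _ => (hF i l).mul (hG l j)

lemma Smo.const (M : Matrix (Fin N) (Fin N) ℝ) : Smo (fun _ : Vec d => M) :=
  fun _ _ => contDiffOn_const

lemma Smo.sum {ι : Type*} {s : Finset ι} {F : ι → Vec d → Matrix (Fin N) (Fin N) ℝ}
    (hF : ∀ i ∈ s, Smo (F i)) : Smo (fun k => ∑ i ∈ s, F i k) := by
  intro i j
  simp only [Matrix.sum_apply]
  exact ContDiffOn.sum fun l hl => hF l hl i j

lemma Smo.smul {F : Vec d → Matrix (Fin N) (Fin N) ℝ} (c : ℝ) (hF : Smo F) :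
    Smo (fun k => c • F k) := by
  intro i j
  simp only [Matrix.smul_apply, smul_eq_mul]
  exact contDiffOn_const.mul (hF i j)

lemma Smo.prod (j : ℕ) (F : Fin j → Vec d → Matrix (Fin N) (Fin N) ℝ) (hF : ∀ i, Smo (F i)) :
    Smo (fun k => (List.ofFn (fun i => F i k)).prod) := by
  induction j with
  | zero => simpa using Smo.const 1
  | succ j ih =>
    simp only [List.ofFn_succ, List.prod_cons]
    exact (hF 0).mul (ih (fun i => F i.succ) fun i => hF _)

lemma smo_H (n : ℕ) : Smo (fun k => H2n d N R' Am n k) := by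
  intro i j
  simp only [H2n, Matrix.sum_apply, Matrix.smul_apply, smul_eq_mul, dotV]
  fun_prop

lemma smo_det {F : Vec d → Matrix (Fin N) (Fin N) ℝ} (hF : Smo F) :
    ContDiffOn ℝ (⊤ : ℕ∞) (fun k => (F k).det) {x : Vec d | x ≠ 0} := by
  simp only [Matrix.det_apply']
  exact ContDiffOn.sum fun σ _ => contDiffOn_const.mul (contDiffOn_prod fun i _ => hF _ _)

lemma smo_inv {F : Vec d → Matrix (Fin N) (Fin N) ℝ} (hF : Smo F)
    (hu : ∀ k, k ≠ 0 → IsUnit (F k).det) : Smo (fun k => (F k)⁻¹) := by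
  intro i j
  simp only [Matrix.inv_def, Ring.inverse_eq_inv', Matrix.smul_apply, smul_eq_mul,
    Matrix.adjugate_apply]
  refine ((smo_det hF).inv fun k hk => (hu k hk).ne_zero).mul (smo_det ?_)
  intro a b
  by_cases h : a = j
  · subst h
    simp only [Matrix.updateRow_self]
    exact contDiffOn_const
  · simp only [Matrix.updateRow_ne h]
    exact hF a b

lemma smo_calA (hu : ∀ k, k ≠ 0 → IsUnit (H2n d N R' Am 1 k).det) (n : ℕ) :
    Smo (fun k => calA d N R' Am n k) := by
  unfold calA
  refine Smo.sum fun j _ => Smo.smul _ (Smo.sum fun f _ => ?_)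
  split_ifs with h
  · exact (smo_inv (smo_H R' Am 1) hu).mul (Smo.prod j _ fun i =>
      (smo_H R' Am _).mul (smo_inv (smo_H R' Am 1) hu))
  · exact Smo.const 0

lemma inv_hom (t : ℝ) (ht : 0 < t) (k : Vec d)
    (hu : IsUnit (H2n d N R' Am 1 k).det) :
    (H2n d N R' Am 1 (t • k))⁻¹ = (t ^ 2)⁻¹ • (H2n d N R' Am 1 k)⁻¹ := by
  rw [H2n_smul, mul_one]
  have := Matrix.inv_smul' (H2n d N R' Am 1 k) (Units.mk0 (t ^ 2) (by positivity)) hu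
  simpa [Units.smul_def] using this

lemma ofFn_smul_prod (j : ℕ) (c : Fin j → ℝ) (M : Fin j → Matrix (Fin N) (Fin N) ℝ) :
    (List.ofFn (fun i => c i • M i)).prod = (∏ i, c i) • (List.ofFn M).prod := by
  induction j with
  | zero => simp
  | succ j ih =>
    rw [List.ofFn_succ, List.prod_cons, ih, List.ofFn_succ, List.prod_cons, Fin.prod_univ_succ,
      smul_mul_smul_comm]

lemma calA_hom (n : ℕ) (t : ℝ) (ht : 0 < t) (k : Vec d)
    (hu : IsUnit (H2n d N R' Am 1 k).det) :
    calA d N R' Am n (t • k) = (t ^ (2 * n)) • calA d N R' Am n k := by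
  unfold calA
  rw [Finset.smul_sum]
  refine Finset.sum_congr rfl fun j _ => ?_
  refine Eq.trans ?_ (smul_comm _ _ _)
  congr 1
  rw [Finset.smul_sum]
  refine Finset.sum_congr rfl fun f _ => ?_
  split_ifs with h
  · rw [inv_hom R' Am t ht k hu]
    have h1 : (fun i : Fin j => H2n d N R' Am ((f i : ℕ) / 2) (t • k) *
        (t ^ 2)⁻¹ • (H2n d N R' Am 1 k)⁻¹) = fun i : Fin j => (t ^ (f i : ℕ) * (t ^ 2)⁻¹) •
        (H2n d N R' Am ((f i : ℕ) / 2) k * (H2n d N R' Am 1 k)⁻¹) := by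
      funext i
      have := (h.1 i).2
      rw [H2n_smul, smul_mul_smul_comm, show 2 * ((f i : ℕ) / 2) = (f i : ℕ) by omega]
    rw [h1, ofFn_smul_prod, Finset.prod_mul_distrib, Finset.prod_pow_eq_pow_sum, h.2,
      smul_mul_smul_comm]
    congr 1
    simp only [Finset.prod_const, Finset.card_univ, Fintype.card_fin]
    have ht2 : t ^ 2 ≠ 0 := by positivity
    rw [pow_add, pow_add, pow_mul t 2 j, inv_pow]
    field_simp
  · simp

/-- The normalised higher order terms. -/
def EE (k : Vec d) (a : ℕ) : Matrix (Fin N) (Fin N) ℝ :=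
  if a = 0 then 0 else H2n d N R' Am (a + 1) k * (H2n d N R' Am 1 k)⁻¹

lemma inner_eq (k : Vec d) (n j : ℕ) :
    (∑ fα : Fin j → Fin (2 * n + 2 * j + 3),
      if (∀ i, 4 ≤ (fα i : ℕ) ∧ (fα i : ℕ) % 2 = 0) ∧
          (∑ i, (fα i : ℕ)) = 2 * n + 2 * j + 2 then
        (H2n d N R' Am 1 k)⁻¹ *
          (List.ofFn (fun i : Fin j =>
            H2n d N R' Am ((fα i : ℕ) / 2) k * (H2n d N R' Am 1 k)⁻¹)).prod
      else 0) = (H2n d N R' Am 1 k)⁻¹ * TT (EE R' Am k) j (n + 1) := by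
  rw [TT, Finset.mul_sum, ← Finset.sum_filter]
  have hsub : (Finset.Nat.antidiagonalTuple j (n + 1)).filter (fun g => ∀ i, 1 ≤ g i) ⊆
      Finset.Nat.antidiagonalTuple j (n + 1) := Finset.filter_subset _ _
  rw [← Finset.sum_subset hsub]
  · refine Finset.sum_bij' (fun f _ => fun i => (f i : ℕ) / 2 - 1)
      (fun g _ => fun i => Fin.ofNat (2 * n + 2 * j + 3) (2 * g i + 2)) ?_ ?_ ?_ ?_ ?_
    · intro f hf
      simp only [Finset.mem_filter, Finset.mem_univ, true_and,
        Finset.Nat.mem_antidiagonalTuple] at hf ⊢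
      refine ⟨?_, fun i => by have := hf.1 i; omega⟩
      have h1 : ∑ i, (f i : ℕ) = ∑ i, (2 * ((f i : ℕ) / 2 - 1) + 2) :=
        Finset.sum_congr rfl fun i _ => by have := hf.1 i; omega
      rw [hf.2, Finset.sum_add_distrib, ← Finset.mul_sum] at h1
      simp at h1
      omega
    · intro g hg
      simp only [Finset.mem_filter, Finset.mem_univ, true_and,
        Finset.Nat.mem_antidiagonalTuple] at hg ⊢
      have hle : ∀ i, g i ≤ n + 1 := fun i => by
        rw [← hg.1]; exact Finset.single_le_sum (fun _ _ => Nat.zero_le _) (Finset.mem_univ i)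
      have hval : ∀ i, ((Fin.ofNat (2 * n + 2 * j + 3) (2 * g i + 2) : Fin _) : ℕ) = 2 * g i + 2 := by
        intro i
        have := hle i
        have := i.2
        exact Nat.mod_eq_of_lt (by omega)
      simp only [hval]
      refine ⟨fun i => by have := hg.2 i; omega, ?_⟩
      rw [Finset.sum_add_distrib, ← Finset.mul_sum, hg.1]
      simp
      omega
    · intro f hf
      simp only [Finset.mem_filter, Finset.mem_univ, true_and] at hf
      funext i
      apply Fin.ext
      have h1 := hf.1 i
      have h2 := (f i).2
      have h3 : 2 * ((f i : ℕ) / 2 - 1) + 2 = (f i : ℕ) := by omega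
      change (2 * ((f i : ℕ) / 2 - 1) + 2) % (2 * n + 2 * j + 3) = _
      rw [h3, Nat.mod_eq_of_lt h2]
    · intro g hg
      simp only [Finset.mem_filter, Finset.Nat.mem_antidiagonalTuple] at hg
      funext i
      have hle : g i ≤ n + 1 := by
        rw [← hg.1]; exact Finset.single_le_sum (fun _ _ => Nat.zero_le _) (Finset.mem_univ i)
      have := i.2
      change ((2 * g i + 2) % (2 * n + 2 * j + 3)) / 2 - 1 = _
      rw [Nat.mod_eq_of_lt (by omega)]
      omega
    · intro f hf
      simp only [Finset.mem_filter, Finset.mem_univ, true_and] at hf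
      congr 3
      funext i
      have h1 := hf.1 i
      have hne : (f i : ℕ) / 2 - 1 ≠ 0 := by omega
      simp only [EE]
      rw [if_neg hne, show (f i : ℕ) / 2 - 1 + 1 = (f i : ℕ) / 2 by omega]
  · intro g hg hg2
    simp only [Finset.mem_filter, hg, true_and, not_forall] at hg2
    obtain ⟨i, hi⟩ := hg2
    rw [List.prod_eq_zero, mul_zero]
    rw [List.mem_ofFn]
    exact ⟨i, by rw [EE, if_pos (by omega)]⟩

lemma calA_eq (k : Vec d) (n : ℕ) :
    calA d N R' Am n k = (H2n d N R' Am 1 k)⁻¹ * bb (EE R' Am k) (n + 1) := by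
  unfold calA
  simp_rw [inner_eq]
  rw [bb, Finset.sum_range_succ', TT_zero, if_neg (Nat.succ_ne_zero n), mul_zero,
    add_zero, Finset.mul_sum, Finset.range_eq_Ico, Finset.sum_Ico_add' (fun j =>
      (H2n d N R' Am 1 k)⁻¹ * ((-1) ^ j * TT (EE R' Am k) j (n + 1))) 0 (n + 1) 1]
  refine Finset.sum_congr (by ext x; simp) fun j _ => ?_
  rcases Nat.even_or_odd j with hj | hj
  · rw [hj.neg_one_pow, hj.neg_one_pow, one_smul, one_mul]
  · rw [hj.neg_one_pow, hj.neg_one_pow, neg_smul, one_smul, neg_mul, one_mul, mul_neg]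

lemma term_eq (k : Vec d) (n : ℕ) :
    (if n = 0 then (H2n d N R' Am 1 k)⁻¹ else calA d N R' Am (n - 1) k) =
      (H2n d N R' Am 1 k)⁻¹ * bb (EE R' Am k) n := by
  cases n with
  | zero => simp [bb_zero]
  | succ n => simp [calA_eq]

lemma H2n_bound (M : ℝ) (hM : ∀ ρ ∈ R', ∑ i, |ρ i| ≤ M) (n : ℕ) (k : Vec d) :
    ‖H2n d N R' Am n k‖ ≤ (2 * ∑ ρ ∈ R', ‖Am ρ‖) * (‖k‖ * M) ^ (2 * n) := by
  rw [H2n, Finset.mul_sum, Finset.sum_mul]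
  refine (norm_sum_le _ _).trans (Finset.sum_le_sum fun ρ hρ => ?_)
  rw [norm_smul, Real.norm_eq_abs]
  have h1 : |dotV k ρ| ≤ ‖k‖ * M := by
    calc |dotV k ρ| ≤ ∑ i, |k i * ρ i| := Finset.abs_sum_le_sum_abs _ _
      _ ≤ ∑ i, ‖k‖ * |ρ i| := Finset.sum_le_sum fun i _ => by
          rw [abs_mul]
          exact mul_le_mul_of_nonneg_right (norm_le_pi_norm k i) (abs_nonneg _)
      _ = ‖k‖ * ∑ i, |ρ i| := (Finset.mul_sum _ _ _).symm
      _ ≤ ‖k‖ * M := mul_le_mul_of_nonneg_left (hM ρ hρ) (norm_nonneg _)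
  have h2 : |(-1 : ℝ) ^ (n + 1) * 2 / ((2 * n).factorial : ℝ)| ≤ 2 := by
    rw [abs_div, abs_mul, abs_pow, abs_neg, abs_one, one_pow, one_mul, abs_two, Nat.abs_cast]
    apply div_le_self (by norm_num)
    exact_mod_cast Nat.one_le_iff_ne_zero.mpr (Nat.factorial_ne_zero _)
  rw [abs_mul, abs_pow]
  calc _ ≤ 2 * (‖k‖ * M) ^ (2 * n) * ‖Am ρ‖ := by gcongr
    _ = _ := by ring

lemma inv_bound (hu : ∀ k, k ≠ 0 → IsUnit (H2n d N R' Am 1 k).det) :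
    ∃ D : ℝ, 0 ≤ D ∧ ∀ k, k ≠ 0 → ‖(H2n d N R' Am 1 k)⁻¹‖ ≤ D * (‖k‖ ^ 2)⁻¹ := by
  have hs : Smo (fun k => (H2n d N R' Am 1 k)⁻¹) := smo_inv (smo_H R' Am 1) hu
  have hc : ContinuousOn (fun k => mnormM (H2n d N R' Am 1 k)⁻¹) (Metric.sphere (0 : Vec d) 1) := by
    unfold mnormM
    refine ContinuousOn.sqrt (continuousOn_finsetSum _ fun i _ => continuousOn_finsetSum _ fun j _ =>
      ((hs i j).continuousOn.mono ?_).pow 2)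
    intro x hx h0
    simp [h0] at hx
  obtain ⟨D, hD⟩ := (isCompact_sphere (0 : Vec d) 1).exists_bound_of_continuousOn hc
  refine ⟨max D 0, le_max_right _ _, fun k hk => ?_⟩
  have hk' : 0 < ‖k‖ := norm_pos_iff.mpr hk
  have hu1 : ‖(‖k‖⁻¹ • k)‖ = 1 := by
    rw [norm_smul, norm_inv, norm_norm, inv_mul_cancel₀ hk'.ne']
  have hk2 : k = ‖k‖ • (‖k‖⁻¹ • k) := by
    rw [smul_smul, mul_inv_cancel₀ hk'.ne', one_smul]
  have h0 : ‖k‖⁻¹ • k ≠ 0 := by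
    intro h; rw [h, norm_zero] at hu1; exact zero_ne_one hu1
  have hb := hD (‖k‖⁻¹ • k) (by simpa using hu1)
  have hh := inv_hom R' Am ‖k‖ hk' (‖k‖⁻¹ • k) (hu _ h0)
  rw [← hk2] at hh
  rw [hh, norm_smul, mul_comm, norm_inv, norm_pow, norm_norm]
  refine mul_le_mul_of_nonneg_right ?_ (by positivity)
  rw [← mnormM_eq]
  exact ((le_abs_self _).trans hb).trans (le_max_left _ _)

lemma EE_bound (hu : ∀ k, k ≠ 0 → IsUnit (H2n d N R' Am 1 k).det) :
    ∃ ε : ℝ, 0 < ε ∧ ∀ k, k ≠ 0 → ‖k‖ < ε → ∀ a, 1 ≤ a → ‖EE R' Am k a‖ ≤ (1 / 4 : ℝ) ^ a := by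
  obtain ⟨D, hD0, hD⟩ := inv_bound R' Am hu
  set M : ℝ := 1 + ∑ ρ ∈ R', ∑ i, |ρ i| with hMdef
  have hM1 : 1 ≤ M := by
    have : 0 ≤ ∑ ρ ∈ R', ∑ i, |ρ i| :=
      Finset.sum_nonneg fun _ _ => Finset.sum_nonneg fun _ _ => abs_nonneg _
    linarith
  have hM : ∀ ρ ∈ R', ∑ i, |ρ i| ≤ M := by
    intro ρ hρ
    have := Finset.single_le_sum (f := fun ρ : Vec d => ∑ i, |ρ i|)
      (fun _ _ => Finset.sum_nonneg fun _ _ => abs_nonneg _) hρ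
    linarith
  set C : ℝ := 2 * ∑ ρ ∈ R', ‖Am ρ‖ with hCdef
  have hC : 0 ≤ C := by positivity
  set K : ℝ := C * D * M ^ 2 + 1 with hK
  have hK1 : 1 ≤ K := by
    have : 0 ≤ C * D * M ^ 2 := by positivity
    linarith
  refine ⟨(2 * K * M)⁻¹, by positivity, fun k hk hke a ha => ?_⟩
  have hk' : 0 < ‖k‖ := norm_pos_iff.mpr hk
  have hq : ‖k‖ * M ≤ 1 / 2 * K⁻¹ := by
    have : ‖k‖ * M ≤ (2 * K * M)⁻¹ * M := by gcongr
    refine this.trans (le_of_eq ?_)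
    field_simp
  rw [EE, if_neg (by omega)]
  calc ‖H2n d N R' Am (a + 1) k * (H2n d N R' Am 1 k)⁻¹‖
      ≤ ‖H2n d N R' Am (a + 1) k‖ * ‖(H2n d N R' Am 1 k)⁻¹‖ := norm_mul_le _ _
    _ ≤ (C * (‖k‖ * M) ^ (2 * (a + 1))) * (D * (‖k‖ ^ 2)⁻¹) :=
        mul_le_mul (H2n_bound R' Am M hM _ k) (hD k hk) (norm_nonneg _) (by positivity)
    _ = (C * D * M ^ 2) * (‖k‖ * M) ^ (2 * a) := by
        rw [show 2 * (a + 1) = 2 * a + 2 by ring, pow_add (‖k‖ * M)]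
        field_simp
    _ ≤ K * (1 / 2 * K⁻¹) ^ (2 * a) := by
        gcongr
        linarith
    _ = (1 / 4) ^ a * (K * K⁻¹ ^ (2 * a)) := by
        rw [mul_pow, pow_mul (1 / 2 : ℝ)]
        norm_num
        ring
    _ ≤ (1 / 4) ^ a * 1 := by
        gcongr
        have h1 : K⁻¹ ^ (2 * a) ≤ K⁻¹ := pow_le_of_le_one (by positivity)
          (inv_le_one_of_one_le₀ hK1) (by omega)
        calc K * K⁻¹ ^ (2 * a) ≤ K * K⁻¹ := by gcongr
          _ = 1 := mul_inv_cancel₀ (by positivity)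
    _ = _ := mul_one _

lemma norm_le_enorm (k : Vec d) : ‖k‖ ≤ enorm k := by
  rw [enorm, pi_norm_le_iff_of_nonneg (Real.sqrt_nonneg _)]
  intro i
  apply Real.abs_le_sqrt
  exact Finset.single_le_sum (f := fun i => (k i) ^ 2) (fun _ _ => sq_nonneg _) (Finset.mem_univ i)

lemma final_part (k : Vec d) (hu : IsUnit (H2n d N R' Am 1 k).det)
    (hb : ∀ a, 1 ≤ a → ‖EE R' Am k a‖ ≤ (1 / 4 : ℝ) ^ a) :
    IsUnit (Hhat d N R' Am k).det ∧
      Summable (fun n : ℕ =>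
        mnormM (if n = 0 then (H2n d N R' Am 1 k)⁻¹ else calA d N R' Am (n - 1) k)) ∧
      ∀ i j : Fin N,
        HasSum (fun n : ℕ =>
          (if n = 0 then (H2n d N R' Am 1 k)⁻¹ else calA d N R' Am (n - 1) k) i j)
          ((Hhat d N R' Am k)⁻¹ i j) := by
  have hE0 : EE R' Am k 0 = 0 := by simp [EE]
  obtain ⟨S, b, hSE, hbS, hmain⟩ := bb_main (EE R' Am k) hE0 hb
  have hbs := bb_summable (EE R' Am k) hE0 hb
  set B := H2n d N R' Am 1 k with hB
  have hHhat : Hhat d N R' Am k = (1 + S) * B := by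
    ext i j
    have h1 := hasSum_entry (hSE.mul_right B) i j
    have h2 := h1.add (hasSum_ite_eq (0 : ℕ) (B i j))
    refine (H_entries R' Am k i j).unique ?_
    rw [add_mul, one_mul, Matrix.add_apply, add_comm]
    convert h2 using 2 with n
    cases n with
    | zero => simp [hE0, hB]
    | succ n =>
      simp only [EE, Nat.add_eq_zero_iff, one_ne_zero, and_false, if_false, add_zero]
      rw [Matrix.mul_assoc, ← hB, Matrix.nonsing_inv_mul _ hu, Matrix.mul_one]
  have hinv : Hhat d N R' Am k * (B⁻¹ * b) = 1 := by
    rw [hHhat, Matrix.mul_assoc, ← Matrix.mul_assoc B, Matrix.mul_nonsing_inv _ hu, Matrix.one_mul]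
    exact hmain
  refine ⟨Matrix.isUnit_det_of_right_inverse hinv, ?_, ?_⟩
  · simp_rw [hB, term_eq, mnormM_eq]
    exact Summable.of_nonneg_of_le (fun _ => norm_nonneg _) (fun n => norm_mul_le _ _)
      (hbs.mul_left _)
  · intro i j
    rw [Matrix.inv_eq_right_inv hinv]
    simp_rw [hB, term_eq]
    exact hasSum_entry (hbS.mul_left _) i j

end concrete

/-- Series inversion of the lattice Fourier multiplier. -/
theorem fourier_multiplier_series_inversion
    (d N : ℕ) (hd : 1 ≤ d) (hN : 1 ≤ N)
    (R' : Finset (Vec d)) (hR0 : (0 : Vec d) ∉ R')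
    (hRsym : ∀ ρ ∈ R', -ρ ∈ R')
    (hRspan : Submodule.span ℝ (R' : Set (Vec d)) = ⊤)
    (Am : Vec d → Matrix (Fin N) (Fin N) ℝ)
    (hAmSym : ∀ (ρ : Vec d) (i j : Fin N), Am ρ i j = Am ρ j i)
    (hAmEven : ∀ ρ ∈ R', Am ρ = Am (-ρ))
    (c₀ : ℝ) (hc₀ : 0 < c₀)
    (hstab : ∀ (k : Vec d) (ξ : Vec N),
      c₀ * (∑ ρ ∈ R', 4 * Real.sin (dotV k ρ / 2) ^ 2) * (∑ i, (ξ i) ^ 2) ≤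
        dotV ξ ((Hhat d N R' Am k).mulVec ξ)) :
    -- (i) the series of homogeneous terms converges absolutely to Ĥ
    (∀ k : Vec d,
      Summable (fun n : ℕ => mnormM (H2n d N R' Am (n + 1) k)) ∧
      ∀ i j : Fin N,
        HasSum (fun n : ℕ => H2n d N R' Am (n + 1) k i j) (Hhat d N R' Am k i j)) ∧
    -- (ii) invertibility of Ĥ₂ away from 0, smoothness and homogeneity of the 𝒜's
    ((∀ k : Vec d, k ≠ 0 → IsUnit (H2n d N R' Am 1 k).det) ∧
     (∀ i j : Fin N,
        ContDiffOn ℝ (⊤ : ℕ∞) (fun k => (H2n d N R' Am 1 k)⁻¹ i j)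
          {x : Vec d | x ≠ 0}) ∧
     (∀ t : ℝ, 0 < t → ∀ k : Vec d, k ≠ 0 →
        (H2n d N R' Am 1 (t • k))⁻¹ = (t ^ 2)⁻¹ • (H2n d N R' Am 1 k)⁻¹) ∧
     (∀ (n : ℕ) (i j : Fin N),
        ContDiffOn ℝ (⊤ : ℕ∞) (fun k => calA d N R' Am n k i j)
          {x : Vec d | x ≠ 0}) ∧
     (∀ (n : ℕ) (t : ℝ), 0 < t → ∀ k : Vec d, k ≠ 0 →
        calA d N R' Am n (t • k) = (t ^ (2 * n)) • calA d N R' Am n k)) ∧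
    -- (iii) the series inverts Ĥ near k = 0
    (∃ ε : ℝ, 0 < ε ∧ ∀ k : Vec d, k ≠ 0 → enorm k < ε →
      IsUnit (Hhat d N R' Am k).det ∧
      Summable (fun n : ℕ =>
        mnormM (if n = 0 then (H2n d N R' Am 1 k)⁻¹ else calA d N R' Am (n - 1) k)) ∧
      ∀ i j : Fin N,
        HasSum (fun n : ℕ =>
          (if n = 0 then (H2n d N R' Am 1 k)⁻¹ else calA d N R' Am (n - 1) k) i j)
          ((Hhat d N R' Am k)⁻¹ i j)) := by
  have hu : ∀ k : Vec d, k ≠ 0 → IsUnit (H2n d N R' Am 1 k).det :=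
    fun k hk => H2_unit R' Am hRspan c₀ hc₀ hstab k hk
  refine ⟨fun k => ⟨?_, H_entries R' Am k⟩, ⟨hu, smo_inv (smo_H R' Am 1) hu, ?_,
    fun n => smo_calA R' Am hu n, ?_⟩, ?_⟩
  · simp_rw [mnormM_eq]
    exact H_summable R' Am k
  · exact fun t ht k hk => inv_hom R' Am t ht k (hu k hk)
  · exact fun n t ht k hk => calA_hom R' Am n t ht k (hu k hk)
  · obtain ⟨ε, hε, h⟩ := EE_bound R' Am hu
    exact ⟨ε, hε, fun k hk hke =>
      final_part R' Am k (hu k hk) (h k hk ((norm_le_enorm k).trans_lt hke))⟩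

end Defect
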